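/- For every ε > 0 there exists a constant C(ε) > 0 with the following property: let p be an odd prime, n ≥ 1 an integer, q := pⁿ, β₁, β₂, β₃ integers coprime to p, and M a real number with 1 ≤ M ≤ q^{1/2−ε}. Let Q, R be positive integers, and suppose that for i = 1, 2 there are γ_i ∈ ℤ with γ_iβ₃ ≡ β_i (mod q), integers a_i and positive integers r_i ≤ R with gcd(a_i,r_i) = 1 and |γ_i/q − a_i/r_i| ≤ 1/(r_iQ). Then Σ_{β₁,β₂,β₃}(M,q) ≤ C(ε) · (R²M³/q + RM³/Q + M) · (RMq)^ε. -/

import Mathlib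

/-- `Σ_{β₁,β₂,β₃}(M,q)`: the number of triples `(x₁,x₂,x₃) ∈ ℤ³` with
`|x₁|,|x₂|,|x₃| ≤ M`, `p ∤ x₁x₂x₃` and `β₁x₁² + β₂x₂² + β₃x₃² ≡ 0 (mod q)`. -/
noncomputable def sigmaCount (p : ℕ) (β₁ β₂ β₃ : ℤ) (M : ℝ) (q : ℕ) : ℕ :=
  Nat.card {x : ℤ × ℤ × ℤ |
    ((|x.1| : ℤ) : ℝ) ≤ M ∧ ((|x.2.1| : ℤ) : ℝ) ≤ M ∧ ((|x.2.2| : ℤ) : ℝ) ≤ M ∧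
    ¬ (p : ℤ) ∣ x.1 * x.2.1 * x.2.2 ∧
    (q : ℤ) ∣ β₁ * x.1 ^ 2 + β₂ * x.2.1 ^ 2 + β₃ * x.2.2 ^ 2}

theorem exists_card_divisors_le_rpow (ε : ℝ) (hε : 0 < ε) :
    ∃ C : ℝ, 0 < C ∧ ∀ n : ℕ, n ≠ 0 → (n.divisors.card : ℝ) ≤ C * (n : ℝ) ^ ε := by
  set δ : ℝ := (2 : ℝ) ^ ε - 1 with hδ
  have hδ0 : 0 < δ := by
    have := Real.one_lt_rpow (x := 2) (by norm_num) hε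
    linarith
  set K : ℝ := 1 + 1 / δ with hK
  have hK1 : 1 ≤ K := by
    have : 0 < 1 / δ := by positivity
    linarith
  set P : ℕ := ⌈(2 : ℝ) ^ (1 / ε)⌉₊ with hP
  refine ⟨K ^ P, by positivity, fun n hn => ?_⟩
  have hfac : ∀ p ∈ n.primeFactors, ((n.factorization p + 1 : ℕ) : ℝ) ≤
      (if p < P then K else 1) * (((p : ℝ) ^ ε) ^ n.factorization p) := by
    intro p hp
    have hp2 : (2 : ℝ) ≤ p := by exact_mod_cast (Nat.prime_of_mem_primeFactors hp).two_le
    set a := n.factorization p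
    have bern : ∀ t : ℝ, 0 ≤ t → 1 + a * t ≤ (1 + t) ^ a := fun t ht =>
      one_add_mul_le_pow (by linarith) a
    split_ifs with h
    · have h1 : (1 + δ) ^ a ≤ ((p : ℝ) ^ ε) ^ a := by
        apply pow_le_pow_left₀ (by linarith)
        rw [hδ]
        have := Real.rpow_le_rpow (by norm_num) hp2 hε.le
        linarith
      have h2 := bern δ hδ0.le
      calc ((a + 1 : ℕ) : ℝ) ≤ K * (1 + a * δ) := by
            push_cast
            have : K * (1 + a * δ) = 1 + a + a * δ + 1 / δ := by rw [hK]; field_simp; ring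
            rw [this]
            have : 0 ≤ (a : ℝ) * δ + 1 / δ := by positivity
            linarith
        _ ≤ _ := by
            apply mul_le_mul_of_nonneg_left (h2.trans h1) (by linarith)
    · have h1 : (2 : ℝ) ≤ (p : ℝ) ^ ε := by
        have h3 : (2 : ℝ) ^ (1 / ε) ≤ p := (Nat.le_ceil _).trans (by exact_mod_cast not_lt.mp h)
        have := Real.rpow_le_rpow (by positivity) h3 hε.le
        rwa [← Real.rpow_mul (by norm_num), one_div_mul_cancel hε.ne', Real.rpow_one] at this
      have h2 := bern 1 (by norm_num)
      have h3 : ((1 : ℝ) + 1) ^ a ≤ ((p : ℝ) ^ ε) ^ a :=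
        pow_le_pow_left₀ (by norm_num) (by linarith) _
      push_cast
      linarith
  have hn' : (n : ℝ) ^ ε = ∏ p ∈ n.primeFactors, ((p : ℝ) ^ ε) ^ n.factorization p := by
    conv_lhs => rw [← Nat.prod_factorization_pow_eq_self hn]
    rw [Finsupp.prod, Nat.cast_prod, ← Real.finsetProd_rpow _ _ (fun i _ => by positivity)]
    refine Finset.prod_congr rfl fun p _ => ?_
    push_cast
    rw [← Real.rpow_natCast, ← Real.rpow_natCast, ← Real.rpow_mul (by positivity),
      ← Real.rpow_mul (by positivity), mul_comm]
  rw [Nat.card_divisors hn, Nat.cast_prod, hn']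
  refine (Finset.prod_le_prod (fun _ _ => by positivity) hfac).trans ?_
  rw [Finset.prod_mul_distrib]
  refine mul_le_mul_of_nonneg_right ?_ (Finset.prod_nonneg fun _ _ => by positivity)
  rw [Finset.prod_ite, Finset.prod_const, Finset.prod_const_one, mul_one]
  refine pow_le_pow_right₀ hK1 ?_
  calc _ ≤ (Finset.range P).card := Finset.card_le_card fun p hp => by
        simpa using (Finset.mem_filter.mp hp).2
    _ = P := Finset.card_range P

theorem two_mul_pow_four_le_of_pell_four {D u₁ v₁ u₂ v₂ : ℤ} (h₁ : u₁ ^ 2 - D * v₁ ^ 2 = 4)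
    (h₂ : u₂ ^ 2 - D * v₂ ^ 2 = 4) (hu₁ : 0 < u₁) (hv₁ : 0 ≤ v₁) (hv₂ : 0 ≤ v₂) (h : u₁ < u₂) :
    2 * u₁ ^ 4 ≤ u₂ ^ 4 := by
  rcases le_or_gt D 0 with hD | hD
  · have h3 : u₂ ≤ 2 := by nlinarith [mul_nonneg (neg_nonneg.mpr hD) (sq_nonneg v₂)]
    obtain rfl : u₁ = 1 := by omega
    obtain rfl : u₂ = 2 := by omega
    norm_num
  · have hv : v₁ < v₂ := by
      by_contra! hc
      nlinarith [mul_nonneg hD.le (mul_nonneg (sub_nonneg.mpr hc) (add_nonneg hv₁ hv₂))]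
    have hB : 0 < u₁ * v₂ - u₂ * v₁ := by
      by_contra! hc
      have h5 : u₁ * v₂ ≤ u₂ * v₁ := by linarith
      have h6 : (u₁ * v₂) ^ 2 ≤ (u₂ * v₁) ^ 2 := pow_le_pow_left₀ (by positivity) h5 2
      have h7 : (u₁ * v₂) ^ 2 - (u₂ * v₁) ^ 2 = 4 * (v₂ ^ 2 - v₁ ^ 2) := by
        linear_combination v₂ ^ 2 * h₁ - v₁ ^ 2 * h₂
      nlinarith
    have hAB : (u₁ * u₂ - D * v₁ * v₂) ^ 2 - D * (u₁ * v₂ - u₂ * v₁) ^ 2 = 16 := by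
      linear_combination (u₂ ^ 2 - D * v₂ ^ 2) * h₁ + 4 * h₂
    have hu : 4 * u₂ = u₁ * (u₁ * u₂ - D * v₁ * v₂) + D * v₁ * (u₁ * v₂ - u₂ * v₁) := by
      linear_combination (-u₂) * h₁
    have hA0 : 0 < u₁ * u₂ - D * v₁ * v₂ := by
      by_contra! hc
      have h6 : (u₁ * u₂) ^ 2 ≤ (D * v₁ * v₂) ^ 2 :=
        pow_le_pow_left₀ (mul_nonneg hu₁.le (by linarith)) (by linarith) 2
      have h7 : (u₁ * u₂) ^ 2 - (D * v₁ * v₂) ^ 2 = 16 + 4 * (D * v₁ ^ 2) + 4 * (D * v₂ ^ 2) := by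
        linear_combination u₂ ^ 2 * h₁ + (4 + D * v₁ ^ 2) * h₂
      have : 0 ≤ D * v₁ ^ 2 := by positivity
      have : 0 ≤ D * v₂ ^ 2 := by positivity
      linarith
    have hDB : 0 < D * (u₁ * v₂ - u₂ * v₁) ^ 2 := mul_pos hD (pow_pos hB 2)
    have hA : 5 ≤ u₁ * u₂ - D * v₁ * v₂ := by
      by_contra! hc
      nlinarith
    have h45 : 5 * u₁ ≤ 4 * u₂ := by
      have : 0 ≤ D * v₁ * (u₁ * v₂ - u₂ * v₁) := by positivity
      nlinarith
    have := pow_le_pow_left₀ (by positivity) h45 4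
    have : 0 ≤ u₁ ^ 4 := by positivity
    have e1 : (5 * u₁) ^ 4 = 625 * u₁ ^ 4 := by ring
    have e2 : (4 * u₂) ^ 4 = 256 * u₂ ^ 4 := by ring
    linarith

theorem Int.eq_of_sq_eq_of_sign_eq {a b : ℤ} (h : a ^ 2 = b ^ 2) (hs : a.sign = b.sign) :
    a = b := by
  rw [← Int.sign_mul_natAbs a, ← Int.sign_mul_natAbs b, hs, Int.natAbs_eq_iff_sq_eq.mpr h]

theorem card_le_nine_mul_of_sign_injOn {α β : Type*} [DecidableEq β] (S : Finset α) (f g : α → ℤ)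
    (k : α → β) (K : Finset β) (hk : ∀ w ∈ S, k w ∈ K)
    (hinj : ∀ w ∈ S, ∀ w' ∈ S, (f w).sign = (f w').sign → (g w).sign = (g w').sign →
      k w = k w' → w = w') : S.card ≤ 9 * K.card := by
  have hs : ∀ a : ℤ, a.sign ∈ ({-1, 0, 1} : Finset ℤ) := fun a => by
    rcases Int.sign_trichotomy a with h | h | h <;> simp [h]
  have := Finset.card_le_card_of_injOn (s := S)
    (t := (({-1, 0, 1} : Finset ℤ) ×ˢ ({-1, 0, 1} : Finset ℤ)) ×ˢ K)
    (fun w => (((f w).sign, (g w).sign), k w))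
    (fun w hw => by
      simp only [Finset.coe_product, Set.mem_prod, Finset.mem_coe]
      exact ⟨⟨hs _, hs _⟩, hk w hw⟩)
    (fun w hw w' hw' h => by
      simp only [Prod.mk.injEq] at h
      exact hinj w hw w' hw' h.1.1 h.1.2 h.2)
  simpa [Finset.card_product] using this

theorem card_pell_four_le {D : ℤ} (hD : D ≠ 0) (U : ℕ) (S : Finset (ℤ × ℤ))
    (hS : ∀ w ∈ S, w.1 ^ 2 - D * w.2 ^ 2 = 4 ∧ w.1.natAbs ≤ U) :
    S.card ≤ 9 * (Nat.log 2 (U ^ 4) + 1) := by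
  have key : ∀ w ∈ S, ∀ w' ∈ S, w.1.sign = w'.1.sign →
      Nat.log 2 (w.1.natAbs ^ 4) = Nat.log 2 (w'.1.natAbs ^ 4) →
      ¬ w.1.natAbs < w'.1.natAbs := by
    intro w hw w' hw' hs hl hlt
    have hw0 : w.1 ≠ 0 := by
      intro h0
      have : w'.1 = 0 := by
        rw [h0] at hs
        exact Int.sign_eq_zero_iff_zero.mp (by simpa using hs.symm)
      simp [h0, this] at hlt
    have h := two_mul_pow_four_le_of_pell_four (D := D) (u₁ := |w.1|) (v₁ := |w.2|)
      (u₂ := |w'.1|) (v₂ := |w'.2|) (by simpa using (hS w hw).1) (by simpa using (hS w' hw').1)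
      (abs_pos.mpr hw0) (abs_nonneg _) (abs_nonneg _) (by zify at hlt; exact hlt)
    have h' : w.1.natAbs ^ 4 * 2 ≤ w'.1.natAbs ^ 4 := by zify; linarith
    have := Nat.log_mono_right (b := 2) h'
    rw [Nat.log_mul_base (by norm_num) (by positivity)] at this
    omega
  rw [← Finset.card_range (Nat.log 2 (U ^ 4) + 1)]
  refine card_le_nine_mul_of_sign_injOn S Prod.fst Prod.snd (fun w => Nat.log 2 (w.1.natAbs ^ 4)) _
    (fun w hw => ?_) fun w hw w' hw' h1 h2 h3 => ?_
  · rw [Finset.mem_range, Nat.lt_succ_iff]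
    exact Nat.log_mono_right (Nat.pow_le_pow_left (hS w hw).2 4)
  · have hn : w.1.natAbs = w'.1.natAbs :=
      le_antisymm (not_lt.mp (key w' hw' w hw h1.symm h3.symm)) (not_lt.mp (key w hw w' hw' h1 h3))
    have hsq := Int.natAbs_eq_iff_sq_eq.mp hn
    refine Prod.ext (Int.eq_of_sq_eq_of_sign_eq hsq h1) (Int.eq_of_sq_eq_of_sign_eq ?_ h2)
    refine mul_left_cancel₀ hD ?_
    linear_combination hsq + (hS w' hw').1 - (hS w hw).1

theorem Int.dvd_two_of_sq_dvd_four_mul {D g : ℤ} (hD : Squarefree D) (h : g ^ 2 ∣ 4 * D) :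
    g ∣ 2 := by
  rcases Int.even_or_odd' g with ⟨k, rfl | rfl⟩
  · have hk : k * k ∣ D := by
      refine Int.dvd_of_mul_dvd_mul_left (a := 4) (by norm_num) ?_
      convert h using 1
      ring
    exact (mul_dvd_mul_left 2 (hD k hk).dvd).trans (mul_one 2).dvd
  · have hc : IsCoprime (2 * k + 1) (2 : ℤ) := ⟨1, -k, by ring⟩
    have hc4 : IsCoprime ((2 * k + 1) ^ 2) (4 : ℤ) := by
      have := hc.pow (m := 2) (n := 2)
      norm_num at this ⊢
      exact this
    have hk := hc4.dvd_of_dvd_mul_left h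
    rw [sq] at hk
    exact (hD _ hk).dvd.trans (one_dvd _)

theorem dvd_two_mul_cross_of_gcd_eq {D N x₀ y₀ x₁ y₁ x₂ y₂ : ℤ} (hD : Squarefree D) (hN : N ≠ 0)
    (h₀ : x₀ ^ 2 - D * y₀ ^ 2 = N) (h₁ : x₁ ^ 2 - D * y₁ ^ 2 = N)
    (h₂ : x₂ ^ 2 - D * y₂ ^ 2 = N) (c₀ : IsCoprime y₀ N) (c₁ : IsCoprime y₁ N)
    (hg : Int.gcd (x₁ * y₀ - x₀ * y₁) N = Int.gcd (x₂ * y₀ - x₀ * y₂) N) :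
    N ∣ 2 * (x₁ * y₂ - x₂ * y₁) := by
  set d : ℤ := (Int.gcd (x₁ * y₀ - x₀ * y₁) N : ℤ) with hd
  have hd0 : d ≠ 0 := by
    rw [hd]; exact_mod_cast (Int.gcd_pos_of_ne_zero_right _ hN).ne'
  obtain ⟨e, he⟩ : d ∣ N := Int.gcd_dvd_right ..
  have cofactor : ∀ x y : ℤ, x ^ 2 - D * y ^ 2 = N → d = Int.gcd (x * y₀ - x₀ * y) N →
      d ∣ x * y₀ - x₀ * y ∧ e ∣ x * y₀ + x₀ * y := by
    intro x y hxy hdx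
    have hdvd : d ∣ x * y₀ - x₀ * y := hdx ▸ Int.gcd_dvd_left ..
    refine ⟨hdvd, ?_⟩
    obtain ⟨t, ht⟩ := hdvd
    have hbez := Int.gcd_eq_gcd_ab (x * y₀ - x₀ * y) N
    rw [← hdx, ht] at hbez
    have hcop : IsCoprime e t := by
      refine ⟨Int.gcdB (d * t) N, Int.gcdA (d * t) N, mul_left_cancel₀ hd0 ?_⟩
      linear_combination -hbez - (Int.gcdB (d * t) N) * he
    refine hcop.dvd_of_dvd_mul_left ⟨y₀ ^ 2 - y ^ 2, mul_left_cancel₀ hd0 ?_⟩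
    linear_combination y₀ ^ 2 * hxy - y ^ 2 * h₀ - (x * y₀ + x₀ * y) * ht + (y₀ ^ 2 - y ^ 2) * he
  obtain ⟨hd₁, he₁⟩ := cofactor x₁ y₁ h₁ rfl
  obtain ⟨hd₂, he₂⟩ := cofactor x₂ y₂ h₂ (by rw [hd, hg])
  have hdN : d ∣ N := ⟨e, he⟩
  have heN : e ∣ N := ⟨d, by rw [he]; ring⟩
  have hdW : d ∣ x₁ * y₂ - x₂ * y₁ := by
    refine (c₀.symm.of_isCoprime_of_dvd_left hdN).dvd_of_dvd_mul_left (y := y₀) ?_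
    have := dvd_sub (hd₁.mul_left y₂) (hd₂.mul_left y₁)
    convert this using 1
    ring
  have heW : e ∣ x₁ * y₂ - x₂ * y₁ := by
    refine (c₀.symm.of_isCoprime_of_dvd_left heN).dvd_of_dvd_mul_left (y := y₀) ?_
    have := dvd_sub (he₁.mul_left y₂) (he₂.mul_left y₁)
    convert this using 1
    ring
  have hg2 : (Int.gcd d e : ℤ) ∣ 2 := by
    set g : ℤ := (Int.gcd d e : ℤ)
    have hgd : g ∣ d := Int.gcd_dvd_left ..
    have hge : g ∣ e := Int.gcd_dvd_right ..
    have hgN : g ^ 2 ∣ N := by rw [he, sq]; exact mul_dvd_mul hgd hge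
    have hgx : g ∣ 2 * x₁ := by
      refine (c₀.symm.of_isCoprime_of_dvd_left (hgd.trans hdN)).dvd_of_dvd_mul_left (y := y₀) ?_
      have := dvd_add (hgd.trans hd₁) (hge.trans he₁)
      convert this using 1
      ring
    refine Int.dvd_two_of_sq_dvd_four_mul hD ?_
    refine ((c₁.symm.of_isCoprime_of_dvd_left hgN).pow_right (n := 2)).dvd_of_dvd_mul_left ?_
    have := dvd_sub (pow_dvd_pow_of_dvd hgx 2) (hgN.mul_left 4)
    convert this using 1
    linear_combination -4 * h₁
  have hNg : N ∣ Int.gcd d e * (x₁ * y₂ - x₂ * y₁) := by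
    rw [Int.gcd_eq_gcd_ab, add_mul]
    refine dvd_add ?_ ?_
    · obtain ⟨t, ht⟩ := heW
      exact ⟨t * d.gcdA e, by rw [ht, he]; ring⟩
    · obtain ⟨t, ht⟩ := hdW
      exact ⟨t * d.gcdB e, by rw [ht, he]; ring⟩
  exact hNg.trans (mul_dvd_mul_right hg2 _)

theorem isCoprime_of_sq_sub_mul_sq {D N x y : ℤ} (h : x ^ 2 - D * y ^ 2 = N)
    (hxy : IsCoprime x y) : IsCoprime y N := by
  have h2 : IsCoprime y (x ^ 2) := (hxy.pow_left (m := 2)).symm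
  rw [← h, show x ^ 2 - D * y ^ 2 = x ^ 2 + y * (-(D * y)) by ring]
  exact h2.add_mul_left_right _

theorem card_primitive_sq_sub_mul_sq_le {D N : ℤ} (hD : Squarefree D) (hN : N ≠ 0) (B : ℕ)
    (S : Finset (ℤ × ℤ))
    (hS : ∀ w ∈ S, w.1 ^ 2 - D * w.2 ^ 2 = N ∧ IsCoprime w.1 w.2 ∧
      w.1.natAbs ≤ B ∧ w.2.natAbs ≤ B) :
    S.card ≤ 9 * (Nat.log 2 ((2 * ((1 + D.natAbs) * B ^ 2)) ^ 4) + 1) *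
      N.natAbs.divisors.card := by
  rcases S.eq_empty_or_nonempty with rfl | ⟨⟨x₀, y₀⟩, hw₀⟩
  · simp
  obtain ⟨h₀, p₀, -, -⟩ := hS _ hw₀
  simp only at h₀ p₀
  have c₀ := isCoprime_of_sq_sub_mul_sq h₀ p₀
  refine (Finset.card_le_mul_card_image (f := fun w : ℤ × ℤ => Int.gcd (w.1 * y₀ - x₀ * w.2) N) S
    _ ?_).trans (Nat.mul_le_mul_left _ (Finset.card_le_card ?_))
  · intro d hd
    obtain ⟨⟨x₁, y₁⟩, hw₁, rfl⟩ := Finset.mem_image.mp hd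
    obtain ⟨h₁, p₁, hxB₁, hyB₁⟩ := hS _ hw₁
    simp only at h₁ p₁ hxB₁ hyB₁
    have c₁ := isCoprime_of_sq_sub_mul_sq h₁ p₁
    set F := S.filter fun w : ℤ × ℤ =>
      Int.gcd (w.1 * y₀ - x₀ * w.2) N = Int.gcd (x₁ * y₀ - x₀ * y₁) N
    have hF : ∀ w ∈ F, N ∣ 2 * (x₁ * w.2 - w.1 * y₁) ∧ N ∣ 2 * (x₁ * w.1 - D * y₁ * w.2) := by
      intro w hw
      obtain ⟨hwS, hwg⟩ := Finset.mem_filter.mp hw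
      have hW := dvd_two_mul_cross_of_gcd_eq hD hN h₀ h₁ (hS w hwS).1 c₀ c₁ hwg.symm
      refine ⟨hW, c₁.symm.dvd_of_dvd_mul_left (y := y₁) ?_⟩
      have := dvd_sub (Dvd.intro_left (2 * w.2) rfl : N ∣ 2 * w.2 * N) (hW.mul_left x₁)
      convert this using 1
      linear_combination 2 * w.2 * h₁
    set φ : ℤ × ℤ → ℤ × ℤ := fun w =>
      (2 * (x₁ * w.1 - D * y₁ * w.2) / N, 2 * (x₁ * w.2 - w.1 * y₁) / N) with hφ
    have hφ1 : ∀ w ∈ F, N * (φ w).1 = 2 * (x₁ * w.1 - D * y₁ * w.2) :=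
      fun w hw => Int.mul_ediv_cancel' (hF w hw).2
    have hφ2 : ∀ w ∈ F, N * (φ w).2 = 2 * (x₁ * w.2 - w.1 * y₁) :=
      fun w hw => Int.mul_ediv_cancel' (hF w hw).1
    have hinj : Set.InjOn φ F := by
      intro w hw w' hw' h
      have e1 := hφ1 w hw
      have e2 := hφ2 w hw
      rw [h, hφ1 w' hw'] at e1
      rw [h, hφ2 w' hw'] at e2
      have h2N : 2 * N ≠ 0 := mul_ne_zero two_ne_zero hN
      refine Prod.ext (mul_left_cancel₀ h2N ?_) (mul_left_cancel₀ h2N ?_)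
      · rw [← h₁]; linear_combination -x₁ * e1 - D * y₁ * e2
      · rw [← h₁]; linear_combination -y₁ * e1 - x₁ * e2
    rw [← Finset.card_image_of_injOn hinj]
    refine card_pell_four_le hD.ne_zero _ _ fun v hv => ?_
    obtain ⟨w, hw, rfl⟩ := Finset.mem_image.mp hv
    obtain ⟨h₂, -, hxB₂, hyB₂⟩ := hS w (Finset.mem_filter.mp hw).1
    constructor
    · have hN2 : N ^ 2 ≠ 0 := pow_ne_zero 2 hN
      refine mul_left_cancel₀ hN2 ?_
      have e1 := hφ1 w hw
      have e2 := hφ2 w hw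
      calc N ^ 2 * ((φ w).1 ^ 2 - D * (φ w).2 ^ 2)
          = (N * (φ w).1) ^ 2 - D * (N * (φ w).2) ^ 2 := by ring
        _ = 4 * ((x₁ ^ 2 - D * y₁ ^ 2) * (w.1 ^ 2 - D * w.2 ^ 2)) := by rw [e1, e2]; ring
        _ = N ^ 2 * 4 := by rw [h₁, h₂]; ring
    · have e1 := congrArg Int.natAbs (hφ1 w hw)
      rw [Int.natAbs_mul, Int.natAbs_mul] at e1
      have hN1 : 1 ≤ N.natAbs := Int.natAbs_pos.mpr hN
      calc (φ w).1.natAbs ≤ N.natAbs * (φ w).1.natAbs := Nat.le_mul_of_pos_left _ hN1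
        _ = 2 * (x₁ * w.1 - D * y₁ * w.2).natAbs := e1
        _ ≤ 2 * (x₁.natAbs * w.1.natAbs + D.natAbs * y₁.natAbs * w.2.natAbs) := by
            refine Nat.mul_le_mul_left 2 ((Int.natAbs_sub_le _ _).trans_eq ?_)
            simp only [Int.natAbs_mul]
        _ ≤ 2 * (B * B + D.natAbs * B * B) := by gcongr
        _ = _ := by ring
  · intro d hd
    obtain ⟨w, hw, rfl⟩ := Finset.mem_image.mp hd
    rw [Nat.mem_divisors]
    exact ⟨Int.natCast_dvd.mp (Int.gcd_dvd_right ..), Int.natAbs_ne_zero.mpr hN⟩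

theorem card_squarefree_sq_sub_mul_sq_le {D N : ℤ} (hD : Squarefree D) (hN : N ≠ 0) (B : ℕ)
    (S : Finset (ℤ × ℤ))
    (hS : ∀ w ∈ S, w.1 ^ 2 - D * w.2 ^ 2 = N ∧ w.1.natAbs ≤ B ∧ w.2.natAbs ≤ B) :
    S.card ≤ 9 * (Nat.log 2 ((2 * ((1 + D.natAbs) * B ^ 2)) ^ 4) + 1) *
      N.natAbs.divisors.card * N.natAbs.divisors.card := by
  have hgcd : ∀ w ∈ S, ((Int.gcd w.1 w.2 : ℤ)) ^ 2 ∣ N := by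
    intro w hw
    rw [← (hS w hw).1]
    exact dvd_sub (pow_dvd_pow_of_dvd (Int.gcd_dvd_left ..) 2)
      ((pow_dvd_pow_of_dvd (Int.gcd_dvd_right ..) 2).mul_left D)
  refine (Finset.card_le_mul_card_image (f := fun w : ℤ × ℤ => Int.gcd w.1 w.2) S
    _ ?_).trans (Nat.mul_le_mul_left _ (Finset.card_le_card ?_))
  · intro g hg
    obtain ⟨w₁, hw₁, rfl⟩ := Finset.mem_image.mp hg
    obtain ⟨N', hN'⟩ := hgcd w₁ hw₁
    set g := Int.gcd w₁.1 w₁.2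
    have hg0 : (g : ℤ) ≠ 0 := by rintro h; apply hN; rw [hN', h]; ring
    have hN'0 : N' ≠ 0 := by rintro rfl; simp at hN'; exact hN hN'
    set F := S.filter fun w : ℤ × ℤ => Int.gcd w.1 w.2 = g
    have hF : ∀ w ∈ F, (g : ℤ) * (w.1 / g) = w.1 ∧ (g : ℤ) * (w.2 / g) = w.2 := by
      intro w hw
      have := (Finset.mem_filter.mp hw).2
      rw [← this]
      exact ⟨Int.mul_ediv_cancel' (Int.gcd_dvd_left ..),
        Int.mul_ediv_cancel' (Int.gcd_dvd_right ..)⟩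
    have hinj : Set.InjOn (fun w : ℤ × ℤ => (w.1 / (g : ℤ), w.2 / (g : ℤ))) F := by
      intro w hw w' hw' h
      simp only [Prod.mk.injEq] at h
      refine Prod.ext ?_ ?_
      · rw [← (hF w hw).1, h.1, (hF w' hw').1]
      · rw [← (hF w hw).2, h.2, (hF w' hw').2]
    rw [← Finset.card_image_of_injOn hinj]
    refine (card_primitive_sq_sub_mul_sq_le hD hN'0 B _ fun v hv => ?_).trans
      (Nat.mul_le_mul_left _ (Finset.card_le_card (Nat.divisors_subset_of_dvd
        (Int.natAbs_ne_zero.mpr hN) (Int.natAbs_dvd_natAbs.mpr ⟨_, hN'.trans (mul_comm _ _)⟩))))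
    obtain ⟨w, hw, rfl⟩ := Finset.mem_image.mp hv
    obtain ⟨h₂, bx, hwy⟩ := hS w (Finset.mem_filter.mp hw).1
    obtain ⟨e1, e2⟩ := hF w hw
    refine ⟨?_, ?_, (Int.natAbs_ediv_le_natAbs _ _).trans bx,
      (Int.natAbs_ediv_le_natAbs _ _).trans hwy⟩
    · refine mul_left_cancel₀ (pow_ne_zero 2 hg0) ?_
      rw [← hN', ← h₂]
      conv_rhs => rw [← e1, ← e2]
      ring
    · have hgw := (Finset.mem_filter.mp hw).2
      rw [Int.isCoprime_iff_gcd_eq_one, ← hgw]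
      exact Int.gcd_div_gcd_div_gcd (by rw [hgw]; omega)
  · intro d hd
    obtain ⟨w, hw, rfl⟩ := Finset.mem_image.mp hd
    rw [Nat.mem_divisors]
    exact ⟨Int.natCast_dvd.mp ((dvd_pow_self _ two_ne_zero).trans (hgcd w hw)),
      Int.natAbs_ne_zero.mpr hN⟩

theorem card_sq_sub_mul_sq_le {D N : ℤ} (hD : D ≠ 0) (hN : N ≠ 0) (B : ℕ)
    (S : Finset (ℤ × ℤ))
    (hS : ∀ w ∈ S, w.1 ^ 2 - D * w.2 ^ 2 = N ∧ w.1.natAbs ≤ B ∧ w.2.natAbs ≤ B) :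
    S.card ≤ 9 * (Nat.log 2 ((2 * ((1 + D.natAbs) * (D.natAbs * B) ^ 2)) ^ 4) + 1) *
      N.natAbs.divisors.card * N.natAbs.divisors.card := by
  obtain ⟨a, f, hf, ha⟩ := Nat.sq_mul_squarefree D.natAbs
  have hD1 : 1 ≤ D.natAbs := Int.natAbs_pos.mpr hD
  have hf0 : f ≠ 0 := by rintro rfl; simp at hf; exact hD (Int.natAbs_eq_zero.mp hf.symm)
  have ha0 : a ≠ 0 := ha.ne_zero
  have hfD : f ≤ D.natAbs := by
    rw [← hf]; exact (Nat.le_self_pow two_ne_zero f).trans (Nat.le_mul_of_pos_right _ (by omega))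
  have haD : a ≤ D.natAbs := by
    rw [← hf]; exact Nat.le_mul_of_pos_left _ (by positivity)
  have hdec : D = (f : ℤ) ^ 2 * (D.sign * a) := by
    conv_lhs => rw [← Int.sign_mul_natAbs D, ← hf]
    push_cast
    ring
  have habs : (D.sign * (a : ℤ)).natAbs = a := by
    rw [Int.natAbs_mul, Int.natAbs_sign_of_ne_zero hD, one_mul, Int.natAbs_natCast]
  have hsf : Squarefree (D.sign * (a : ℤ)) := by
    rw [← Int.squarefree_natAbs, habs]; exact ha
  have hinj : Set.InjOn (fun w : ℤ × ℤ => (w.1, (f : ℤ) * w.2)) S := by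
    intro w _ w' _ h
    simp only [Prod.mk.injEq, mul_eq_mul_left_iff, Nat.cast_eq_zero, hf0, or_false] at h
    exact Prod.ext h.1 h.2
  rw [← Finset.card_image_of_injOn hinj]
  refine (card_squarefree_sq_sub_mul_sq_le hsf hN (D.natAbs * B) _ fun v hv => ?_).trans ?_
  · obtain ⟨w, hw, rfl⟩ := Finset.mem_image.mp hv
    obtain ⟨h, bx, hwy⟩ := hS w hw
    refine ⟨?_, bx.trans (Nat.le_mul_of_pos_left _ hD1), ?_⟩
    · rw [← h]
      conv_rhs => rw [hdec]
      ring
    · simp only [Int.natAbs_mul, Int.natAbs_natCast]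
      gcongr
  · rw [habs]
    gcongr

theorem exists_card_binary_form_le (ε : ℝ) (hε : 0 < ε) :
    ∃ C : ℝ, 0 < C ∧ ∀ (T : ℕ) (a b N : ℤ), a ≠ 0 → b ≠ 0 → N ≠ 0 →
      a.natAbs ≤ T → b.natAbs ≤ T → N.natAbs ≤ T → ∀ S : Finset (ℤ × ℤ),
      (∀ w ∈ S, a * w.1 ^ 2 + b * w.2 ^ 2 = N ∧ w.1.natAbs ≤ T ∧ w.2.natAbs ≤ T) →
      (S.card : ℝ) ≤ C * (T : ℝ) ^ ε := by
  obtain ⟨C, hC, hdiv⟩ := exists_card_divisors_le_rpow (ε / 44) (by positivity)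
  refine ⟨9 * C ^ 3 * (256 : ℝ) ^ (ε / 44), by positivity, ?_⟩
  intro T a b N ha hb hN haT hbT hNT S hS
  have hT : 1 ≤ T := (Int.natAbs_pos.mpr ha).trans_le haT
  have hT0 : (0 : ℝ) < T := by exact_mod_cast hT
  have hinj : Set.InjOn (fun w : ℤ × ℤ => (a * w.1, w.2)) S := by
    intro w _ w' _ h
    simp only [Prod.mk.injEq, mul_eq_mul_left_iff, ha, or_false] at h
    exact Prod.ext h.1 h.2
  have hcard := card_sq_sub_mul_sq_le (D := -(a * b)) (N := a * N)
    (neg_ne_zero.mpr (mul_ne_zero ha hb)) (mul_ne_zero ha hN) (T ^ 2)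
    (S.image fun w : ℤ × ℤ => (a * w.1, w.2)) (fun v hv => by
      obtain ⟨w, hw, rfl⟩ := Finset.mem_image.mp hv
      obtain ⟨h, bx, hwy⟩ := hS w hw
      refine ⟨by rw [← h]; ring, ?_, hwy.trans (Nat.le_self_pow two_ne_zero T)⟩
      simp only [Int.natAbs_mul, sq]
      gcongr)
  rw [Finset.card_image_of_injOn hinj] at hcard
  have hDT : (-(a * b)).natAbs ≤ T ^ 2 := by
    rw [Int.natAbs_neg, Int.natAbs_mul, sq]; gcongr
  have hNT' : (a * N).natAbs ≤ T ^ 2 := by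
    rw [Int.natAbs_mul, sq]; gcongr
  set m : ℕ := (2 * ((1 + (-(a * b)).natAbs) * ((-(a * b)).natAbs * T ^ 2) ^ 2)) ^ 4 with hm
  have hm0 : m ≠ 0 := by
    have : 0 < (-(a * b)).natAbs := Int.natAbs_pos.mpr (neg_ne_zero.mpr (mul_ne_zero ha hb))
    positivity
  have hmT : m ≤ 256 * T ^ 40 := by
    have h1 : 1 ≤ T ^ 2 := Nat.one_le_pow _ _ hT
    calc m ≤ (2 * ((T ^ 2 + T ^ 2) * (T ^ 2 * T ^ 2) ^ 2)) ^ 4 := by rw [hm]; gcongr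
      _ = 256 * T ^ 40 := by ring
  have hlog : ((Nat.log 2 m + 1 : ℕ) : ℝ) ≤
      C * ((256 : ℝ) ^ (ε / 44) * (T : ℝ) ^ (40 * (ε / 44))) := by
    have h1 := hdiv (2 ^ Nat.log 2 m) (by positivity)
    rw [Nat.divisors_prime_pow Nat.prime_two, Finset.card_map, Finset.card_range] at h1
    refine h1.trans (mul_le_mul_of_nonneg_left ?_ hC.le)
    rw [Real.rpow_mul hT0.le, ← Real.mul_rpow (by positivity) (by positivity)]
    refine Real.rpow_le_rpow (by positivity) ?_ (by positivity)
    have := (Nat.pow_log_le_self 2 hm0).trans hmT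
    rw [show (40 : ℝ) = ((40 : ℕ) : ℝ) by norm_num, Real.rpow_natCast]
    exact_mod_cast this
  have hd : ((a * N).natAbs.divisors.card : ℝ) ≤ C * (T : ℝ) ^ (2 * (ε / 44)) := by
    refine (hdiv _ (Int.natAbs_ne_zero.mpr (mul_ne_zero ha hN))).trans
      (mul_le_mul_of_nonneg_left ?_ hC.le)
    rw [Real.rpow_mul hT0.le]
    refine Real.rpow_le_rpow (by positivity) ?_ (by positivity)
    rw [show (2 : ℝ) = ((2 : ℕ) : ℝ) by norm_num, Real.rpow_natCast]
    exact_mod_cast hNT'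
  have hexp : (T : ℝ) ^ (40 * (ε / 44)) * (T : ℝ) ^ (2 * (ε / 44)) * (T : ℝ) ^ (2 * (ε / 44)) =
      (T : ℝ) ^ ε := by
    rw [← Real.rpow_add hT0, ← Real.rpow_add hT0]
    congr 1
    ring
  calc (S.card : ℝ) ≤ 9 * ((Nat.log 2 m + 1 : ℕ) : ℝ) * ((a * N).natAbs.divisors.card : ℝ) *
        ((a * N).natAbs.divisors.card : ℝ) := by exact_mod_cast hcard
    _ ≤ 9 * (C * ((256 : ℝ) ^ (ε / 44) * (T : ℝ) ^ (40 * (ε / 44)))) *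
        (C * (T : ℝ) ^ (2 * (ε / 44))) * (C * (T : ℝ) ^ (2 * (ε / 44))) := by gcongr
    _ = _ := by rw [← hexp]; ring

theorem card_Icc_neg_natCast (L : ℕ) : (Finset.Icc (-(L : ℤ)) L).card = 2 * L + 1 := by
  rw [Int.card_Icc]
  omega

theorem mem_Icc_neg_natCast {a : ℤ} {L : ℕ} (h : a.natAbs ≤ L) :
    a ∈ Finset.Icc (-(L : ℤ)) L := by
  rw [Finset.mem_Icc]
  omega

theorem card_ternary_le {r₁ r₂ b₁ b₂ q : ℤ} (hr₁ : r₁ ≠ 0) (hr₂ : r₂ ≠ 0) (hb₁ : b₁ ≠ 0)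
    (X L K : ℕ) (S : Finset (ℤ × ℤ × ℤ))
    (hX : ∀ x ∈ S, x.1.natAbs ≤ X ∧ x.2.1.natAbs ≤ X ∧ x.2.2.natAbs ≤ X)
    (hS : ∀ x ∈ S, ∃ m : ℤ, m.natAbs ≤ L ∧
      r₁ * r₂ * x.2.2 ^ 2 + r₂ * b₁ * x.1 ^ 2 + r₁ * b₂ * x.2.1 ^ 2 = q * m)
    (hK : ∀ y ∈ S, r₂ * y.2.2 ^ 2 + b₂ * y.2.1 ^ 2 ≠ 0 → ∀ F : Finset (ℤ × ℤ),
      (∀ w ∈ F, r₂ * w.1 ^ 2 + b₂ * w.2 ^ 2 = r₂ * y.2.2 ^ 2 + b₂ * y.2.1 ^ 2 ∧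
        w.1.natAbs ≤ X ∧ w.2.natAbs ≤ X) → F.card ≤ K) :
    S.card ≤ (K + 9) * ((2 * L + 1) * (2 * X + 1)) := by
  choose! m hmL hm using hS
  set box := Finset.Icc (-(L : ℤ)) L ×ˢ Finset.Icc (-(X : ℤ)) X with hbox
  have hboxcard : box.card = (2 * L + 1) * (2 * X + 1) := by
    rw [hbox, Finset.card_product, card_Icc_neg_natCast, card_Icc_neg_natCast]
  rw [← hboxcard, add_mul, ← Finset.card_filter_add_card_filter_not
    (p := fun x : ℤ × ℤ × ℤ => r₂ * x.2.2 ^ 2 + b₂ * x.2.1 ^ 2 = 0), add_comm]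
  refine Nat.add_le_add ?_ ?_
  · refine (Finset.card_le_mul_card_image (f := fun x : ℤ × ℤ × ℤ => (m x, x.1)) _ K ?_).trans
      (Nat.mul_le_mul_left _ (Finset.card_le_card ?_))
    · intro k hk
      obtain ⟨y, hy, rfl⟩ := Finset.mem_image.mp hk
      obtain ⟨hyS, hy0⟩ := Finset.mem_filter.mp hy
      set F := (S.filter fun x : ℤ × ℤ × ℤ => ¬ r₂ * x.2.2 ^ 2 + b₂ * x.2.1 ^ 2 = 0).filter
        fun x => (m x, x.1) = (m y, y.1)
      have hF : ∀ x ∈ F, x ∈ S ∧ m x = m y ∧ x.1 = y.1 := by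
        intro x hx
        obtain ⟨h1, h2⟩ := Finset.mem_filter.mp hx
        exact ⟨(Finset.mem_filter.mp h1).1, by simpa using h2⟩
      have hinj : Set.InjOn (fun x : ℤ × ℤ × ℤ => (x.2.2, x.2.1)) F := by
        intro x hx x' hx' h
        simp only [Prod.mk.injEq] at h
        exact Prod.ext ((hF x hx).2.2.trans (hF x' hx').2.2.symm) (Prod.ext h.2 h.1)
      rw [← Finset.card_image_of_injOn hinj]
      refine hK y hyS hy0 _ fun w hw => ?_
      obtain ⟨x, hx, rfl⟩ := Finset.mem_image.mp hw
      obtain ⟨hxS, hxm, hx1⟩ := hF x hx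
      refine ⟨mul_left_cancel₀ hr₁ ?_, (hX x hxS).2.2, (hX x hxS).2.1⟩
      have e1 := hm x hxS
      have e2 := hm y hyS
      rw [hxm, hx1] at e1
      linear_combination e1 - e2
    · intro k hk
      obtain ⟨y, hy, rfl⟩ := Finset.mem_image.mp hk
      have hyS := (Finset.mem_filter.mp hy).1
      exact Finset.mem_product.mpr
        ⟨mem_Icc_neg_natCast (hmL y hyS), mem_Icc_neg_natCast (hX y hyS).1⟩
  · refine card_le_nine_mul_of_sign_injOn _ (fun x : ℤ × ℤ × ℤ => x.1) (fun x => x.2.2)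
      (fun x => (m x, x.2.1)) box (fun x hx => ?_) fun x hx x' hx' h1 h2 h3 => ?_
    · have hxS := (Finset.mem_filter.mp hx).1
      exact Finset.mem_product.mpr
        ⟨mem_Icc_neg_natCast (hmL x hxS), mem_Icc_neg_natCast (hX x hxS).2.1⟩
    · obtain ⟨hxS, hx0⟩ := Finset.mem_filter.mp hx
      obtain ⟨hxS', hx0'⟩ := Finset.mem_filter.mp hx'
      simp only [Prod.mk.injEq] at h3
      have e1 := hm x hxS
      have e2 := hm x' hxS'
      rw [h3.1] at e1
      rw [h3.2] at e1 hx0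
      refine Prod.ext (Int.eq_of_sq_eq_of_sign_eq ?_ h1)
        (Prod.ext h3.2 (Int.eq_of_sq_eq_of_sign_eq ?_ h2))
      · refine mul_left_cancel₀ (mul_ne_zero hr₂ hb₁) ?_
        linear_combination e1 - e2 - r₁ * hx0 + r₁ * hx0'
      · refine mul_left_cancel₀ hr₂ ?_
        linear_combination hx0 - hx0'

theorem card_cube_le (X : ℕ) (S : Finset (ℤ × ℤ × ℤ))
    (hX : ∀ x ∈ S, x.1.natAbs ≤ X ∧ x.2.1.natAbs ≤ X ∧ x.2.2.natAbs ≤ X) :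
    S.card ≤ (2 * X + 1) ^ 3 := by
  calc S.card ≤ (Finset.Icc (-(X : ℤ)) X ×ˢ Finset.Icc (-(X : ℤ)) X ×ˢ
        Finset.Icc (-(X : ℤ)) X).card := Finset.card_le_card fun x hx => by
          simp only [Finset.mem_product]
          exact ⟨mem_Icc_neg_natCast (hX x hx).1, mem_Icc_neg_natCast (hX x hx).2.1,
            mem_Icc_neg_natCast (hX x hx).2.2⟩
    _ = (2 * X + 1) ^ 3 := by
      simp only [Finset.card_product, card_Icc_neg_natCast]
      ring

theorem abs_mul_sub_mul_le_div {γ a : ℤ} {q r Q : ℕ} (hq : 0 < q) (hr : 0 < r)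
    (h : |(γ : ℝ) / q - (a : ℝ) / r| ≤ 1 / ((r : ℝ) * Q)) :
    |((γ * r - a * q : ℤ) : ℝ)| ≤ (q : ℝ) / Q := by
  have hq' : (0 : ℝ) < q := by exact_mod_cast hq
  have hr' : (0 : ℝ) < r := by exact_mod_cast hr
  have e : ((γ * r - a * q : ℤ) : ℝ) = (q * r) * ((γ : ℝ) / q - (a : ℝ) / r) := by
    push_cast
    field_simp
  rw [e, abs_mul, abs_of_pos (by positivity : (0 : ℝ) < q * r)]
  calc (q : ℝ) * r * |(γ : ℝ) / q - (a : ℝ) / r| ≤ q * r * (1 / (r * Q)) := by gcongr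
    _ = q / Q := by field_simp

theorem natCast_dvd_of_mul_eq {p n r : ℕ} (hp : p.Prime) {γ β β' a : ℤ}
    (hβ : ¬ (p : ℤ) ∣ β) (hn : n ≠ 0) (hγ : (p : ℤ) ^ n ∣ γ * β' - β)
    (h : γ * r - a * (p ^ n : ℕ) = 0) : p ^ n ∣ r := by
  have hp' : Prime (p : ℤ) := Nat.prime_iff_prime_int.mp hp
  have hpγ : ¬ (p : ℤ) ∣ γ := fun hd => hβ <| by
    have := dvd_sub (hd.mul_right β') ((dvd_pow_self (p : ℤ) hn).trans hγ)
    simpa using this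
  have hc : IsCoprime ((p : ℤ) ^ n) γ :=
    ((Prime.coprime_iff_not_dvd hp').mpr hpγ).pow_left
  have : (p : ℤ) ^ n ∣ γ * r := ⟨a, by push_cast at h; linear_combination h⟩
  exact_mod_cast hc.dvd_of_dvd_mul_left this

theorem sigmaCount_eq_card (p : ℕ) (β₁ β₂ β₃ : ℤ) {M : ℝ} (hM : 0 ≤ M) (q : ℕ) :
    ∃ S : Finset (ℤ × ℤ × ℤ), sigmaCount p β₁ β₂ β₃ M q = S.card ∧ ∀ x ∈ S,
      (x.1.natAbs ≤ ⌊M⌋₊ ∧ x.2.1.natAbs ≤ ⌊M⌋₊ ∧ x.2.2.natAbs ≤ ⌊M⌋₊) ∧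
      (q : ℤ) ∣ β₁ * x.1 ^ 2 + β₂ * x.2.1 ^ 2 + β₃ * x.2.2 ^ 2 := by
  have habs : ∀ a : ℤ, ((|a| : ℤ) : ℝ) ≤ M → a.natAbs ≤ ⌊M⌋₊ := fun a ha => by
    rw [Nat.le_floor_iff hM, Nat.cast_natAbs]
    exact ha
  have hfin : {x : ℤ × ℤ × ℤ |
      ((|x.1| : ℤ) : ℝ) ≤ M ∧ ((|x.2.1| : ℤ) : ℝ) ≤ M ∧ ((|x.2.2| : ℤ) : ℝ) ≤ M ∧
      ¬ (p : ℤ) ∣ x.1 * x.2.1 * x.2.2 ∧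
      (q : ℤ) ∣ β₁ * x.1 ^ 2 + β₂ * x.2.1 ^ 2 + β₃ * x.2.2 ^ 2}.Finite := by
    refine (Finset.finite_toSet (Finset.Icc (-(⌊M⌋₊ : ℤ)) ⌊M⌋₊ ×ˢ Finset.Icc (-(⌊M⌋₊ : ℤ)) ⌊M⌋₊ ×ˢ
        Finset.Icc (-(⌊M⌋₊ : ℤ)) ⌊M⌋₊)).subset fun x hx => ?_
    simp only [Finset.mem_coe, Finset.mem_product]
    exact ⟨mem_Icc_neg_natCast (habs _ hx.1), mem_Icc_neg_natCast (habs _ hx.2.1),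
      mem_Icc_neg_natCast (habs _ hx.2.2.1)⟩
  refine ⟨hfin.toFinset, ?_, fun x hx => ?_⟩
  · rw [sigmaCount, Nat.card_coe_set_eq, Set.ncard_eq_toFinset_card _ hfin]
  · have hx := hfin.mem_toFinset.mp hx
    exact ⟨⟨habs _ hx.1, habs _ hx.2.1, habs _ hx.2.2.1⟩, hx.2.2.2.2⟩

/-- The congruence, cleared of denominators, becomes an integral equation `… = q * m`. -/
theorem exists_eq_mul_of_dvd {p n : ℕ} (hp : p.Prime) {β₁ β₂ β₃ γ₁ γ₂ : ℤ}
    (hβ₃ : ¬ (p : ℤ) ∣ β₃) (hγ₁ : (p : ℤ) ^ n ∣ γ₁ * β₃ - β₁) (hγ₂ : (p : ℤ) ^ n ∣ γ₂ * β₃ - β₂)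
    (a₁ a₂ r₁ r₂ x₁ x₂ x₃ : ℤ)
    (h : ((p ^ n : ℕ) : ℤ) ∣ β₁ * x₁ ^ 2 + β₂ * x₂ ^ 2 + β₃ * x₃ ^ 2) :
    ∃ m : ℤ, r₁ * r₂ * x₃ ^ 2 + r₂ * (γ₁ * r₁ - a₁ * (p ^ n : ℕ)) * x₁ ^ 2 +
      r₁ * (γ₂ * r₂ - a₂ * (p ^ n : ℕ)) * x₂ ^ 2 = (p ^ n : ℕ) * m := by
  have hp' : Prime (p : ℤ) := Nat.prime_iff_prime_int.mp hp
  have hc : IsCoprime ((p : ℤ) ^ n) β₃ :=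
    ((Prime.coprime_iff_not_dvd hp').mpr hβ₃).pow_left
  push_cast at h ⊢
  have hd : (p : ℤ) ^ n ∣ γ₁ * x₁ ^ 2 + γ₂ * x₂ ^ 2 + x₃ ^ 2 := by
    refine hc.dvd_of_dvd_mul_left ?_
    have := dvd_add h (dvd_add (hγ₁.mul_left (x₁ ^ 2)) (hγ₂.mul_left (x₂ ^ 2)))
    convert this using 1
    ring
  obtain ⟨k, hk⟩ := hd
  exact ⟨r₁ * r₂ * k - r₂ * a₁ * x₁ ^ 2 - r₁ * a₂ * x₂ ^ 2, by linear_combination r₁ * r₂ * hk⟩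

theorem natAbs_le_floor_of_eq_mul {M : ℝ} {q R : ℕ} (hq : 0 < q) {r₁ r₂ : ℕ}
    (hr₁R : r₁ ≤ R) (hr₂R : r₂ ≤ R) {Q : ℕ} {b₁ b₂ x₁ x₂ x₃ m : ℤ}
    (hb₁ : |(b₁ : ℝ)| ≤ (q : ℝ) / Q) (hb₂ : |(b₂ : ℝ)| ≤ (q : ℝ) / Q)
    (hx₁ : |(x₁ : ℝ)| ≤ M) (hx₂ : |(x₂ : ℝ)| ≤ M) (hx₃ : |(x₃ : ℝ)| ≤ M)
    (hm : (r₁ : ℤ) * r₂ * x₃ ^ 2 + r₂ * b₁ * x₁ ^ 2 + r₁ * b₂ * x₂ ^ 2 = q * m) :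
    m.natAbs ≤ ⌊(R : ℝ) ^ 2 * M ^ 2 / q + 2 * (R * M ^ 2 / Q)⌋₊ := by
  have hq' : (0 : ℝ) < q := by exact_mod_cast hq
  have hr₁' : (r₁ : ℝ) ≤ R := by exact_mod_cast hr₁R
  have hr₂' : (r₂ : ℝ) ≤ R := by exact_mod_cast hr₂R
  have hM : 0 ≤ M := (abs_nonneg _).trans hx₁
  refine Nat.le_floor ?_
  rw [Nat.cast_natAbs, Int.cast_abs]
  refine le_of_mul_le_mul_left ?_ hq'
  have hm' : (r₁ : ℝ) * r₂ * x₃ ^ 2 + r₂ * b₁ * x₁ ^ 2 + r₁ * b₂ * x₂ ^ 2 = q * m := by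
    exact_mod_cast hm
  calc (q : ℝ) * |(m : ℝ)| = |(q : ℝ) * m| := by rw [abs_mul, abs_of_pos hq']
    _ = |(r₁ : ℝ) * r₂ * x₃ ^ 2 + r₂ * b₁ * x₁ ^ 2 + r₁ * b₂ * x₂ ^ 2| := by rw [hm']
    _ ≤ |(r₁ : ℝ) * r₂ * x₃ ^ 2| + |(r₂ : ℝ) * b₁ * x₁ ^ 2| +
        |(r₁ : ℝ) * b₂ * x₂ ^ 2| := abs_add_three _ _ _
    _ = (r₁ : ℝ) * r₂ * |(x₃ : ℝ)| ^ 2 + r₂ * |(b₁ : ℝ)| * |(x₁ : ℝ)| ^ 2 +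
        r₁ * |(b₂ : ℝ)| * |(x₂ : ℝ)| ^ 2 := by simp [abs_mul]
    _ ≤ (R : ℝ) * R * M ^ 2 + R * (q / Q) * M ^ 2 + R * (q / Q) * M ^ 2 := by gcongr
    _ = q * ((R : ℝ) ^ 2 * M ^ 2 / q + 2 * (R * M ^ 2 / Q)) := by field_simp; ring

theorem natAbs_binary_le_ceil {M : ℝ} (hM : 1 ≤ M) {q R Q r : ℕ} (hq : 0 < q) (hQ : 0 < Q)
    (hR : 0 < R) (hr : r ≤ R) {b : ℤ} (hb : |(b : ℝ)| ≤ (q : ℝ) / Q) {x y : ℤ}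
    (hx : |(x : ℝ)| ≤ M) (hy : |(y : ℝ)| ≤ M) :
    b.natAbs ≤ ⌈2 * ((R : ℝ) * M * q) ^ 2⌉₊ ∧
      ((r : ℤ) * x ^ 2 + b * y ^ 2).natAbs ≤ ⌈2 * ((R : ℝ) * M * q) ^ 2⌉₊ := by
  have hq' : (1 : ℝ) ≤ q := by exact_mod_cast hq
  have hQ' : (1 : ℝ) ≤ Q := by exact_mod_cast hQ
  have hR' : (1 : ℝ) ≤ R := by exact_mod_cast hR
  have hr' : (r : ℝ) ≤ R := by exact_mod_cast hr
  have hbq : |(b : ℝ)| ≤ q := hb.trans (div_le_self (by positivity) hQ')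
  have hRq : (R : ℝ) ≤ (R * q) ^ 2 := by nlinarith [mul_le_mul hR' hq' (by norm_num) (by linarith)]
  have hqR : (q : ℝ) ≤ (R * q) ^ 2 := by nlinarith [mul_le_mul hR' hq' (by norm_num) (by linarith)]
  have e : 2 * ((R : ℝ) * M * q) ^ 2 = (R * q) ^ 2 * M ^ 2 + (R * q) ^ 2 * M ^ 2 := by ring
  have hM2 : 1 ≤ M ^ 2 := one_le_pow₀ hM
  constructor
  · rw [← Nat.cast_le (α := ℝ)]
    refine le_trans ?_ (Nat.le_ceil _)
    rw [Nat.cast_natAbs, Int.cast_abs, e]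
    nlinarith
  · rw [← Nat.cast_le (α := ℝ)]
    refine le_trans ?_ (Nat.le_ceil _)
    rw [Nat.cast_natAbs, Int.cast_abs, e]
    push_cast
    calc |(r : ℝ) * x ^ 2 + b * y ^ 2| ≤ |(r : ℝ) * x ^ 2| + |(b : ℝ) * y ^ 2| := abs_add_le _ _
      _ = r * |(x : ℝ)| ^ 2 + |(b : ℝ)| * |(y : ℝ)| ^ 2 := by simp [abs_mul]
      _ ≤ R * M ^ 2 + q * M ^ 2 := by gcongr
      _ ≤ _ := by gcongr

/-- A bound for `Σ_{β₁,β₂,β₃}(M,q)` when both `β₁β₃⁻¹/q` and `β₂β₃⁻¹/q`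
admit rational approximations with small denominators `r_i ≤ R` of quality `1/(r_i Q)`. -/
theorem sigma_bound_small_denominators (ε : ℝ) (hε : 0 < ε) :
    ∃ Cε : ℝ, 0 < Cε ∧
      ∀ (p : ℕ), p.Prime → Odd p → ∀ (n : ℕ), 1 ≤ n → ∀ (β₁ β₂ β₃ : ℤ),
        ¬ (p : ℤ) ∣ β₁ → ¬ (p : ℤ) ∣ β₂ → ¬ (p : ℤ) ∣ β₃ →
        ∀ M : ℝ, 1 ≤ M → M ≤ ((p : ℝ) ^ n) ^ ((1 : ℝ) / 2 - ε) →
        ∀ Q R : ℕ, 0 < Q → 0 < R →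
        ∀ γ₁ γ₂ : ℤ, ((p : ℤ) ^ n ∣ γ₁ * β₃ - β₁) → ((p : ℤ) ^ n ∣ γ₂ * β₃ - β₂) →
        ∀ (a₁ a₂ : ℤ) (r₁ r₂ : ℕ), 0 < r₁ → 0 < r₂ → r₁ ≤ R → r₂ ≤ R →
          Int.gcd a₁ r₁ = 1 → Int.gcd a₂ r₂ = 1 →
          |(γ₁ : ℝ) / (p : ℝ) ^ n - (a₁ : ℝ) / (r₁ : ℝ)| ≤ 1 / ((r₁ : ℝ) * (Q : ℝ)) →
          |(γ₂ : ℝ) / (p : ℝ) ^ n - (a₂ : ℝ) / (r₂ : ℝ)| ≤ 1 / ((r₂ : ℝ) * (Q : ℝ)) →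
          (sigmaCount p β₁ β₂ β₃ M (p ^ n) : ℝ) ≤
            Cε * ((R : ℝ) ^ 2 * M ^ 3 / (p : ℝ) ^ n + (R : ℝ) * M ^ 3 / (Q : ℝ) + M) *
              ((R : ℝ) * M * (p : ℝ) ^ n) ^ ε := by
  obtain ⟨C, hC, hbin⟩ := exists_card_binary_form_le (ε / 2) (by positivity)
  refine ⟨(C * 3 ^ (ε / 2) + 9) * 12 + 27, by positivity, ?_⟩
  intro p hp _ n hn β₁ β₂ β₃ hβ₁ hβ₂ hβ₃ M hM _ Q R hQ hR γ₁ γ₂ hγ₁ hγ₂ a₁ a₂ r₁ r₂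
    hr₁ hr₂ hr₁R hr₂R _ _ hap₁ hap₂
  obtain ⟨S, hcard, hS⟩ := sigmaCount_eq_card p β₁ β₂ β₃ (zero_le_one.trans hM) (p ^ n)
  rw [hcard]
  rw [← Nat.cast_pow p n] at hap₁ hap₂ ⊢
  have hq : 0 < p ^ n := pow_pos hp.pos n
  have hb₁ := abs_mul_sub_mul_le_div hq hr₁ hap₁
  have hb₂ := abs_mul_sub_mul_le_div hq hr₂ hap₂
  have hz₁ := natCast_dvd_of_mul_eq (r := r₁) (a := a₁) hp hβ₁ (by omega) hγ₁
  have hz₂ := natCast_dvd_of_mul_eq (r := r₂) (a := a₂) hp hβ₂ (by omega) hγ₂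
  have heq := fun x hx => exists_eq_mul_of_dvd hp hβ₃ hγ₁ hγ₂ a₁ a₂ r₁ r₂
    x.1 x.2.1 x.2.2 (hS x hx).2
  set q : ℕ := p ^ n
  set b₁ : ℤ := γ₁ * r₁ - a₁ * q
  set b₂ : ℤ := γ₂ * r₂ - a₂ * q
  have hq' : (1 : ℝ) ≤ q := by exact_mod_cast hq
  have hQ' : (1 : ℝ) ≤ Q := by exact_mod_cast hQ
  have hR' : (1 : ℝ) ≤ R := by exact_mod_cast hR
  set Y : ℝ := (R : ℝ) * M * q
  set E : ℝ := (R : ℝ) ^ 2 * M ^ 3 / q + (R : ℝ) * M ^ 3 / Q + M with hE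
  have hY : 1 ≤ Y := one_le_mul_of_one_le_of_one_le (one_le_mul_of_one_le_of_one_le hR' hM) hq'
  have hYε : 1 ≤ Y ^ ε := Real.one_le_rpow hY hε.le
  have hE0 : 0 ≤ E := by positivity
  have hfloor : (⌊M⌋₊ : ℝ) ≤ M := Nat.floor_le (by linarith)
  have h3M : 2 * (⌊M⌋₊ : ℝ) + 1 ≤ 3 * M := by linarith
  have hreal : ∀ a : ℤ, a.natAbs ≤ ⌊M⌋₊ → |(a : ℝ)| ≤ M := fun a ha => by
    rw [← Int.cast_abs, ← Nat.cast_natAbs]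
    exact (Nat.cast_le.mpr ha).trans hfloor
  by_cases hb : b₁ = 0 ∨ b₂ = 0
  · have hqR : q ≤ R := by
      rcases hb with h | h
      · exact (Nat.le_of_dvd hr₁ (hz₁ h)).trans hr₁R
      · exact (Nat.le_of_dvd hr₂ (hz₂ h)).trans hr₂R
    have hqR' : (q : ℝ) ≤ R := by exact_mod_cast hqR
    have hM3 : M ^ 3 ≤ E := by
      have h1 : M ^ 3 ≤ (R : ℝ) ^ 2 * M ^ 3 / q := by
        rw [le_div_iff₀ (by positivity), mul_comm]
        gcongr
        nlinarith
      have h2 : 0 ≤ (R : ℝ) * M ^ 3 / Q := by positivity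
      linarith
    have h1 : (S.card : ℝ) ≤ (2 * (⌊M⌋₊ : ℝ) + 1) ^ 3 := by
      exact_mod_cast card_cube_le ⌊M⌋₊ S fun x hx => (hS x hx).1
    calc (S.card : ℝ) ≤ (3 * M) ^ 3 := h1.trans (by gcongr)
      _ = 27 * M ^ 3 * 1 := by ring
      _ ≤ ((C * 3 ^ (ε / 2) + 9) * 12 + 27) * E * Y ^ ε := by
        gcongr
        have : 0 ≤ (C * (3 : ℝ) ^ (ε / 2) + 9) * 12 := by positivity
        linarith
  · push Not at hb
    set L : ℕ := ⌊(R : ℝ) ^ 2 * M ^ 2 / q + 2 * (R * M ^ 2 / Q)⌋₊ with hL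
    set T : ℕ := ⌈2 * Y ^ 2⌉₊ with hT
    have hT3 : (T : ℝ) ≤ 3 * Y ^ 2 := by
      have := Nat.ceil_lt_add_one (a := 2 * Y ^ 2) (by positivity)
      have : 1 ≤ Y ^ 2 := one_le_pow₀ hY
      linarith
    have hYT : Y ≤ T := le_trans (by nlinarith) (Nat.le_ceil _)
    have hMT : ⌊M⌋₊ ≤ T := by
      rw [← Nat.cast_le (α := ℝ)]
      refine hfloor.trans (le_trans ?_ hYT)
      calc M = 1 * M * 1 := by ring
        _ ≤ (R : ℝ) * M * q := by gcongr
    have hRT : R ≤ T := by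
      rw [← Nat.cast_le (α := ℝ)]
      refine le_trans ?_ hYT
      calc (R : ℝ) = R * 1 * 1 := by ring
        _ ≤ (R : ℝ) * M * q := by gcongr
    have hTε : (T : ℝ) ^ (ε / 2) ≤ 3 ^ (ε / 2) * Y ^ ε := by
      calc (T : ℝ) ^ (ε / 2) ≤ (3 * Y ^ 2) ^ (ε / 2) := by gcongr
        _ = 3 ^ (ε / 2) * Y ^ ε := by
          rw [Real.mul_rpow (by norm_num) (by positivity), ← Real.rpow_natCast,
            ← Real.rpow_mul (by positivity)]
          congr 2
          push_cast
          ring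
    have hmain := card_ternary_le (r₁ := r₁) (r₂ := r₂) (b₁ := b₁) (b₂ := b₂) (q := q)
      (by positivity) (by positivity) hb.1 ⌊M⌋₊ L ⌊C * (T : ℝ) ^ (ε / 2)⌋₊ S
      (fun x hx => (hS x hx).1)
      (fun x hx => by
        obtain ⟨m, hm⟩ := heq x hx
        obtain ⟨h1, h2, h3⟩ := (hS x hx).1
        exact ⟨m, natAbs_le_floor_of_eq_mul hq hr₁R hr₂R hb₁ hb₂ (hreal _ h1) (hreal _ h2)
          (hreal _ h3) hm, hm⟩)
      (fun y hy hy0 F hF => by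
        obtain ⟨-, h2, h3⟩ := (hS y hy).1
        obtain ⟨hbT, hNT⟩ := natAbs_binary_le_ceil hM hq hQ hR hr₂R hb₂ (hreal _ h3) (hreal _ h2)
        refine Nat.le_floor (hbin T r₂ b₂ _ (by positivity) hb.2 hy0 (by simpa using hr₂R.trans hRT)
          hbT hNT F fun w hw => ?_)
        obtain ⟨e, h4, h5⟩ := hF w hw
        exact ⟨e, h4.trans hMT, h5.trans hMT⟩)
    have hL' : (L : ℝ) ≤ (R : ℝ) ^ 2 * M ^ 2 / q + 2 * (R * M ^ 2 / Q) :=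
      Nat.floor_le (by positivity)
    have hK' : (⌊C * (T : ℝ) ^ (ε / 2)⌋₊ : ℝ) ≤ C * (3 ^ (ε / 2) * Y ^ ε) :=
      (Nat.floor_le (by positivity)).trans (by gcongr)
    have hLM : (2 * (L : ℝ) + 1) * (2 * (⌊M⌋₊ : ℝ) + 1) ≤ 12 * E := by
      calc (2 * (L : ℝ) + 1) * (2 * (⌊M⌋₊ : ℝ) + 1)
          ≤ (2 * ((R : ℝ) ^ 2 * M ^ 2 / q + 2 * (R * M ^ 2 / Q)) + 1) * (3 * M) := by gcongr
        _ = 6 * ((R : ℝ) ^ 2 * M ^ 3 / q) + 12 * (R * M ^ 3 / Q) + 3 * M := by ring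
        _ ≤ 12 * E := by
          have h1 : 0 ≤ (R : ℝ) ^ 2 * M ^ 3 / q := by positivity
          rw [hE]
          linarith
    calc (S.card : ℝ) ≤ ((⌊C * (T : ℝ) ^ (ε / 2)⌋₊ : ℝ) + 9) *
          ((2 * (L : ℝ) + 1) * (2 * (⌊M⌋₊ : ℝ) + 1)) := by exact_mod_cast hmain
      _ ≤ (C * (3 ^ (ε / 2) * Y ^ ε) + 9 * Y ^ ε) * (12 * E) := by
        gcongr
        linarith
      _ = (C * 3 ^ (ε / 2) + 9) * 12 * E * Y ^ ε := by ring
      _ ≤ ((C * 3 ^ (ε / 2) + 9) * 12 + 27) * E * Y ^ ε := by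
        gcongr
        linarith
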